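/- There exist a constant c > 0 and an n₀ such that for all n ≥ n₀ the following two properties hold simultaneously (Nisan's natural property for majority-of-threshold circuits, usefulness and largeness with density 1/2): (i) every function f : {0,1}^{⌈n/2⌉} × {0,1}^{⌊n/2⌋} → {-1,1} that is computed by a majority vote of at most 2^{⌊n/c⌋} linear threshold functions on the n combined input bits satisfies 2^n · R₂(f) > 2^{2n/3}; and (ii) if f is drawn uniformly at random from the set of all functions {0,1}^{⌈n/2⌉} × {0,1}^{⌊n/2⌋} → {-1,1}, then Pr_f[2^n · R₂(f) ≤ 2^{2n/3}] ≥ 1/2. -/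

import Mathlib

/-!
Both halves rest on the identity `∑_{x,x',y,y'} f f f f = ∑_{y,y'} (∑_x f(x,y) f(x,y'))²`.

*Usefulness.* Two applications of Cauchy-Schwarz show that the correlation of `f` with every
rectangle is at most `R₂(f)^{1/4}` (`rect_pow_four_le`). A threshold function `θ ≤ a x + b y` is
nearly a sum of few rectangles: sort `X` by `a` and cut it into `m` consecutive blocks of size `K`.
For fixed `y` the set of accepted `x` is an upper set, so it is a union of whole blocks up to part
of a single block. Hence the correlation of `f` with the threshold is at most
`m R₂(f)^{1/4} + K / |X|` (`thr_corr_le`). If `f` is the majority of `s` thresholds, then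
`f (2 #{i : Tᵢ = 1} - s - 1/2) ≥ 1/2` pointwise, so after averaging the correlations of `f` with
the thresholds and with the constant `1` cannot all be below order `1/s`. Taking `m = 8 · 2^q` with
`s ≤ 2^q` and `q = ⌊n/48⌋` gives `R₂(f) ≥ 2^{-28-8q} > 2^{-n/3}`.

*Largeness.* For random `f` only the degenerate quadruples `x = x'` or `y = y'` contribute to the
expectation, so `E R₂(f) ≤ 1/|X| + 1/|Y|`, and Markov's inequality applies because
`R₂ ≥ 0`.
-/

open Finset
open scoped Classical

/-- The 2-party norm of `f : X × Y → ℝ`. -/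
noncomputable def R2 {X Y : Type*} [Fintype X] [Fintype Y] (f : X × Y → ℝ) : ℝ :=
  (∑ x : X, ∑ x' : X, ∑ y : Y, ∑ y' : Y,
      f (x, y) * f (x, y') * f (x', y) * f (x', y')) /
    ((Fintype.card X : ℝ) ^ 2 * (Fintype.card Y : ℝ) ^ 2)

/-- The `±1` value associated with a boolean. -/
def sgn (b : Bool) : ℝ := if b then 1 else -1

/-- The `0/1` real value of a boolean input bit. -/
def b2r (b : Bool) : ℝ := if b then 1 else 0

/-- The `±1`-valued majority vote of `s` linear threshold functions on
`{0,1}^{⌈n/2⌉} × {0,1}^{⌊n/2⌋}`, where the `i`-th threshold function has weights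
`w i, v i` (on the two halves of the combined input) and threshold `θ i`. -/
noncomputable def majThr (n s : ℕ)
    (w : Fin s → Fin ((n + 1) / 2) → ℝ) (v : Fin s → Fin (n / 2) → ℝ) (θ : Fin s → ℝ)
    (p : (Fin ((n + 1) / 2) → Bool) × (Fin (n / 2) → Bool)) : ℝ :=
  if s < 2 * (Finset.univ.filter fun i : Fin s =>
      θ i ≤ (∑ j, w i j * b2r (p.1 j)) + ∑ j, v i j * b2r (p.2 j)).card
    then 1 else -1

/-! ### The 2-party norm and correlation with rectangles -/

/-- The unnormalised 2-party norm is a sum of squares. -/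
lemma R2_sum_eq {X Y : Type*} [Fintype X] [Fintype Y] (f : X × Y → ℝ) :
    (∑ x : X, ∑ x' : X, ∑ y : Y, ∑ y' : Y,
      f (x, y) * f (x, y') * f (x', y) * f (x', y')) =
    ∑ y : Y, ∑ y' : Y, (∑ x : X, f (x, y) * f (x, y')) ^ 2 := by
  have h1 : ∀ x : X, (∑ x' : X, ∑ y : Y, ∑ y' : Y,
      f (x, y) * f (x, y') * f (x', y) * f (x', y')) =
      ∑ y : Y, ∑ y' : Y, ∑ x' : X, (f (x, y) * f (x, y')) * (f (x', y) * f (x', y')) := by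
    intro x
    rw [Finset.sum_comm]
    refine Finset.sum_congr rfl fun y _ => ?_
    rw [Finset.sum_comm]
    refine Finset.sum_congr rfl fun y' _ => Finset.sum_congr rfl fun x' _ => by ring
  rw [Finset.sum_congr rfl fun x _ => h1 x, Finset.sum_comm]
  refine Finset.sum_congr rfl fun y _ => ?_
  rw [Finset.sum_comm]
  refine Finset.sum_congr rfl fun y' _ => ?_
  rw [sq, Finset.sum_mul_sum]

lemma R2_nonneg {X Y : Type*} [Fintype X] [Fintype Y] (f : X × Y → ℝ) : 0 ≤ R2 f := by
  unfold R2
  rw [R2_sum_eq]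
  positivity

/-- The 2-party norm controls correlation with (weighted) rectangles `u ⊗ v`, by applying
Cauchy-Schwarz first over `x` and then over pairs `(y, y')`. -/
lemma rect_pow_four_le {X Y : Type*} [Fintype X] [Fintype Y] [Nonempty X] [Nonempty Y]
    (f : X × Y → ℝ) (u : X → ℝ) (v : Y → ℝ) (hu : ∀ x, |u x| ≤ 1) (hv : ∀ y, |v y| ≤ 1) :
    (∑ x, ∑ y, f (x, y) * u x * v y) ^ 4 ≤
      R2 f * ((Fintype.card X : ℝ) * Fintype.card Y) ^ 4 := by
  have hX : (0 : ℝ) < Fintype.card X := by exact_mod_cast Fintype.card_pos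
  have hY : (0 : ℝ) < Fintype.card Y := by exact_mod_cast Fintype.card_pos
  have hu2 : ∀ x, u x ^ 2 ≤ 1 := fun x => (sq_le_one_iff_abs_le_one _).2 (hu x)
  have hv2 : ∀ x, v x ^ 2 ≤ 1 := fun x => (sq_le_one_iff_abs_le_one _).2 (hv x)
  set S := ∑ x, ∑ y, f (x, y) * u x * v y with hS
  set Q := ∑ y : Y, ∑ y' : Y, (∑ x : X, f (x, y) * f (x, y')) ^ 2 with hQ
  have e1 : S = ∑ x, u x * ∑ y, f (x, y) * v y := by
    rw [hS]
    refine Finset.sum_congr rfl fun x _ => ?_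
    rw [Finset.mul_sum]
    exact Finset.sum_congr rfl fun y _ => by ring
  have s1 : S ^ 2 ≤ Fintype.card X * ∑ x, (∑ y, f (x, y) * v y) ^ 2 := by
    rw [e1]
    refine (sq_sum_le_card_mul_sum_sq).trans ?_
    rw [Finset.card_univ]
    refine mul_le_mul_of_nonneg_left (Finset.sum_le_sum fun x _ => ?_) hX.le
    rw [mul_pow]
    exact mul_le_of_le_one_left (sq_nonneg _) (hu2 x)
  set Z := ∑ x, (∑ y, f (x, y) * v y) ^ 2 with hZ
  have e2 : Z = ∑ p : Y × Y, (v p.1 * v p.2) * ∑ x, f (x, p.1) * f (x, p.2) := by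
    have : ∀ x, (∑ y, f (x, y) * v y) ^ 2 =
        ∑ p : Y × Y, (v p.1 * v p.2) * (f (x, p.1) * f (x, p.2)) := by
      intro x
      rw [sq, Finset.sum_mul_sum, Fintype.sum_prod_type]
      exact Finset.sum_congr rfl fun y _ => Finset.sum_congr rfl fun y' _ => by ring
    rw [hZ, Finset.sum_congr rfl fun x _ => this x, Finset.sum_comm]
    exact Finset.sum_congr rfl fun p _ => by rw [Finset.mul_sum]
  have s2 : Z ^ 2 ≤ (Fintype.card Y : ℝ) ^ 2 * Q := by
    rw [e2]
    refine (sq_sum_le_card_mul_sum_sq).trans ?_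
    have : ((Finset.univ : Finset (Y × Y)).card : ℝ) = (Fintype.card Y : ℝ) ^ 2 := by
      rw [Finset.card_univ, Fintype.card_prod]; push_cast; ring
    rw [this, hQ, ← Fintype.sum_prod_type' (f := fun y y' => (∑ x : X, f (x, y) * f (x, y')) ^ 2)]
    refine mul_le_mul_of_nonneg_left (Finset.sum_le_sum fun p _ => ?_) (by positivity)
    rw [mul_pow, mul_pow]
    exact mul_le_of_le_one_left (sq_nonneg _)
      (mul_le_one₀ (hv2 _) (sq_nonneg _) (hv2 _))
  have hR : R2 f * ((Fintype.card X : ℝ) * Fintype.card Y) ^ 4 =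
      (Fintype.card X : ℝ) ^ 2 * ((Fintype.card Y : ℝ) ^ 2 * Q) := by
    unfold R2
    rw [R2_sum_eq, ← hQ]
    field_simp
  rw [hR]
  calc S ^ 4 = (S ^ 2) ^ 2 := by ring
    _ ≤ (Fintype.card X * Z) ^ 2 := pow_le_pow_left₀ (sq_nonneg _) s1 2
    _ = (Fintype.card X : ℝ) ^ 2 * Z ^ 2 := by ring
    _ ≤ _ := mul_le_mul_of_nonneg_left s2 (by positivity)

/-! ### Threshold functions as sums of few rectangles -/

/-- A rank function listing the elements of `X` in nondecreasing order of `a`. -/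
lemma exists_rank {X : Type*} [Fintype X] (a : X → ℝ) :
    ∃ r : X → ℕ, Function.Injective r ∧ (∀ x, r x < Fintype.card X) ∧
      ∀ x x', r x < r x' → a x ≤ a x' := by
  let e := Fintype.equivFin X
  let g : Fin (Fintype.card X) → ℝ := a ∘ e.symm
  let σ := Tuple.sort g
  refine ⟨fun x => (σ.symm (e x)).val, ?_, fun x => (σ.symm (e x)).isLt, ?_⟩
  · intro x y h
    exact e.injective (σ.symm.injective (Fin.ext h))
  · intro x x' h
    have := Tuple.monotone_sort g (a := σ.symm (e x)) (b := σ.symm (e x')) (le_of_lt h)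
    simpa [g, σ] using this

/-- If every rectangle has (unnormalised) correlation at most `M` with `f`, then every threshold
`θ ≤ a x + b y` has correlation at most `m M + K |Y|`, where `X` is cut into `m` blocks of
size `K`. -/
lemma thr_corr_le {X Y : Type*} [Fintype X] [Fintype Y]
    (f : X × Y → ℝ) (hf : ∀ p, |f p| ≤ 1) (M : ℝ)
    (hM : ∀ (u : X → ℝ) (v : Y → ℝ), (∀ x, |u x| ≤ 1) → (∀ y, |v y| ≤ 1) →
      |∑ x, ∑ y, f (x, y) * u x * v y| ≤ M)
    (a : X → ℝ) (b : Y → ℝ) (θ : ℝ) (m K : ℕ) (hK : 0 < K) (hmK : Fintype.card X ≤ m * K) :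
    |∑ x, ∑ y, f (x, y) * (if θ ≤ a x + b y then 1 else 0)| ≤ m * M + K * Fintype.card Y := by
  obtain ⟨r, hinj, hlt, hmono⟩ := exists_rank a
  let B : X → ℕ := fun x => r x / K
  have hB : ∀ x, B x < m := fun x => (Nat.div_lt_iff_lt_mul hK).2 ((hlt x).trans_le hmK)
  -- `G p y`: every `x` in block `p` is accepted together with `y`
  let G : ℕ → Y → Prop := fun p y => ∀ x', B x' = p → θ ≤ a x' + b y
  let e : X → Y → ℝ := fun x y => if θ ≤ a x + b y ∧ ¬ G (B x) y then 1 else 0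
  have hdec : ∀ x y, (if θ ≤ a x + b y then (1 : ℝ) else 0) =
      (∑ p ∈ Finset.range m, (if B x = p then (1 : ℝ) else 0) * (if G p y then 1 else 0)) +
        e x y := by
    intro x y
    have : (∑ p ∈ Finset.range m, (if B x = p then (1 : ℝ) else 0) * (if G p y then 1 else 0))
        = if G (B x) y then 1 else 0 := by
      rw [Finset.sum_eq_single (B x)]
      · simp
      · intro p _ hp
        rw [if_neg (Ne.symm hp), zero_mul]
      · intro h
        exact absurd (Finset.mem_range.2 (hB x)) h
    rw [this]
    by_cases hG : G (B x) y
    · have := hG x rfl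
      simp [e, hG, this]
    · simp [e, hG]
  have herr : ∀ y, ∑ x, e x y ≤ K := by
    intro y
    have hs : ∑ x, e x y = ((Finset.univ.filter fun x => θ ≤ a x + b y ∧ ¬ G (B x) y).card : ℝ) := by
      rw [Finset.natCast_card_filter]
    rw [hs]
    norm_cast
    set E := Finset.univ.filter fun x => θ ≤ a x + b y ∧ ¬ G (B x) y with hE
    -- acceptance is upward closed in the rank, so only one block can be partially accepted
    have key : ∀ x₁ ∈ E, ∀ x₂ ∈ E, ¬ B x₁ < B x₂ := by
      intro x₁ h₁ x₂ h₂ hlt12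
      rw [hE, Finset.mem_filter] at h₁ h₂
      apply h₂.2.2
      intro x' hx'
      have hr : r x₁ < r x' := by
        by_contra hcon
        have : B x' ≤ B x₁ := Nat.div_le_div_right (not_lt.1 hcon)
        omega
      have := hmono _ _ hr
      linarith [h₁.2.1]
    rcases E.eq_empty_or_nonempty with h0 | ⟨x₀, hx₀⟩
    · simp [h0]
    · calc E.card = (E.image r).card := (Finset.card_image_of_injective _ hinj).symm
        _ ≤ (Finset.Ico (B x₀ * K) (B x₀ * K + K)).card := by
            refine Finset.card_le_card fun i hi => ?_
            obtain ⟨x, hx, rfl⟩ := Finset.mem_image.1 hi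
            have hBx : r x / K = B x₀ :=
              le_antisymm (not_lt.1 (key _ hx₀ _ hx)) (not_lt.1 (key _ hx _ hx₀))
            rw [Finset.mem_Ico, ← hBx]
            have h1 := Nat.div_add_mod' (r x) K
            have h2 := Nat.mod_lt (r x) hK
            omega
        _ = K := by simp
  have hsum : ∑ x, ∑ y, f (x, y) * (if θ ≤ a x + b y then (1 : ℝ) else 0) =
      (∑ p ∈ Finset.range m, ∑ x, ∑ y,
        f (x, y) * (if B x = p then (1 : ℝ) else 0) * (if G p y then 1 else 0)) +
      ∑ y, ∑ x, f (x, y) * e x y := by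
    rw [Finset.sum_comm (s := Finset.range m), Finset.sum_comm (s := (Finset.univ : Finset Y)),
      ← Finset.sum_add_distrib]
    refine Finset.sum_congr rfl fun x _ => ?_
    rw [Finset.sum_comm (s := Finset.range m), ← Finset.sum_add_distrib]
    refine Finset.sum_congr rfl fun y _ => ?_
    rw [hdec, mul_add, Finset.mul_sum]
    congr 1
    exact Finset.sum_congr rfl fun p _ => by ring
  rw [hsum]
  refine (abs_add_le _ _).trans (add_le_add ?_ ?_)
  · refine (Finset.abs_sum_le_sum_abs _ _).trans ?_
    refine (Finset.sum_le_card_nsmul _ _ M fun p _ => ?_).trans ?_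
    · apply hM
      · intro x; split_ifs <;> simp
      · intro y; split_ifs <;> simp
    · simp
  · refine (Finset.abs_sum_le_sum_abs _ _).trans ?_
    refine (Finset.sum_le_card_nsmul _ _ (K : ℝ) fun y _ => ?_).trans ?_
    · refine (Finset.abs_sum_le_sum_abs _ _).trans (le_trans ?_ (herr y))
      refine Finset.sum_le_sum fun x _ => ?_
      have he : 0 ≤ e x y := by simp only [e]; split_ifs <;> simp
      rw [abs_mul, abs_of_nonneg he]
      exact mul_le_of_le_one_left he (hf _)
    · rw [Finset.card_univ, nsmul_eq_mul, mul_comm]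

/-! ### Usefulness -/

lemma majThr_corr {n s : ℕ}
    (w : Fin s → Fin ((n + 1) / 2) → ℝ) (v : Fin s → Fin (n / 2) → ℝ) (θ : Fin s → ℝ)
    (p : (Fin ((n + 1) / 2) → Bool) × (Fin (n / 2) → Bool)) :
    1 / 2 ≤ 2 * (∑ i, majThr n s w v θ p * (if θ i ≤ (∑ j, w i j * b2r (p.1 j)) +
      ∑ j, v i j * b2r (p.2 j) then (1 : ℝ) else 0)) - (s + 1 / 2) * majThr n s w v θ p := by
  rw [← Finset.mul_sum, Finset.sum_boole]
  unfold majThr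
  set k := (Finset.univ.filter fun i : Fin s =>
      θ i ≤ (∑ j, w i j * b2r (p.1 j)) + ∑ j, v i j * b2r (p.2 j)).card
  split_ifs with h
  · have : (s : ℝ) + 1 ≤ 2 * k := by exact_mod_cast h
    linarith
  · have : 2 * (k : ℝ) ≤ s := by exact_mod_cast not_lt.1 h
    linarith

lemma abs_majThr {n s : ℕ}
    (w : Fin s → Fin ((n + 1) / 2) → ℝ) (v : Fin s → Fin (n / 2) → ℝ) (θ : Fin s → ℝ)
    (p : (Fin ((n + 1) / 2) → Bool) × (Fin (n / 2) → Bool)) :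
    |majThr n s w v θ p| ≤ 1 := by
  unfold majThr
  split_ifs <;> simp

/-- A majority of at most `2^q` thresholds has `R₂ ≥ ρ⁴` for `ρ = 2^{-7-2q}`. -/
lemma majThr_R2_lower (n s q : ℕ) (hs : s ≤ 2 ^ q) (hq : q + 3 ≤ (n + 1) / 2)
    (w : Fin s → Fin ((n + 1) / 2) → ℝ) (v : Fin s → Fin (n / 2) → ℝ) (θ : Fin s → ℝ) :
    (((2 : ℝ) ^ (7 + 2 * q))⁻¹) ^ 4 ≤ R2 (majThr n s w v θ) := by
  by_contra! hcon
  set f := majThr n s w v θ with hf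
  set ρ : ℝ := ((2 : ℝ) ^ (7 + 2 * q))⁻¹ with hρ
  have hρ0 : 0 < ρ := by positivity
  let X := Fin ((n + 1) / 2) → Bool
  let Y := Fin (n / 2) → Bool
  set N : ℝ := (Fintype.card X : ℝ) * Fintype.card Y with hN
  have hX : (0 : ℝ) < Fintype.card X := by exact_mod_cast Fintype.card_pos
  have hY : (0 : ℝ) < Fintype.card Y := by exact_mod_cast Fintype.card_pos
  have hN0 : 0 < N := mul_pos hX hY
  have hrect : ∀ (u : X → ℝ) (v : Y → ℝ), (∀ x, |u x| ≤ 1) → (∀ y, |v y| ≤ 1) →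
      |∑ x, ∑ y, f (x, y) * u x * v y| ≤ ρ * N := by
    intro u v hu hv
    refine le_of_pow_le_pow_left₀ (n := 4) (by norm_num) (by positivity) ?_
    rw [Even.pow_abs (by decide), mul_pow]
    exact (rect_pow_four_le f u v hu hv).trans
      (mul_le_mul_of_nonneg_right hcon.le (by positivity))
  set K : ℕ := 2 ^ ((n + 1) / 2 - (q + 3)) with hK
  have hcard : Fintype.card X = 2 ^ (q + 3) * K := by
    rw [hK, ← pow_add]
    simp [X]
    omega
  have hthr : ∀ i, ∑ x : X, ∑ y : Y, f (x, y) * (if θ i ≤ (∑ j, w i j * b2r (x j)) +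
      ∑ j, v i j * b2r (y j) then (1 : ℝ) else 0) ≤ (2 : ℝ) ^ (q + 3) * (ρ * N) + K * Fintype.card Y := by
    intro i
    have := thr_corr_le f (fun p => abs_majThr w v θ p) (ρ * N) hrect
      (fun x => ∑ j, w i j * b2r (x j)) (fun y => ∑ j, v i j * b2r (y j)) (θ i)
      (2 ^ (q + 3)) K (by positivity) hcard.le
    push_cast at this
    exact (le_abs_self _).trans this
  have hone : -(ρ * N) ≤ ∑ x : X, ∑ y : Y, f (x, y) := by
    have := (abs_le.1 (hrect (fun _ => 1) (fun _ => 1) (by simp) (by simp))).1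
    simpa using this
  have htot : N * (1 / 2) ≤ 2 * (∑ i, ∑ x : X, ∑ y : Y, f (x, y) * (if θ i ≤
      (∑ j, w i j * b2r (x j)) + ∑ j, v i j * b2r (y j) then (1 : ℝ) else 0)) -
      (s + 1 / 2) * ∑ x : X, ∑ y : Y, f (x, y) := by
    have h1 : N * (1 / 2) = ∑ _x : X, ∑ _y : Y, (1 / 2 : ℝ) := by
      simp only [Finset.sum_const, Finset.card_univ, nsmul_eq_mul]
      rw [hN]; ring
    rw [h1, Finset.sum_comm (s := (Finset.univ : Finset (Fin s))), Finset.mul_sum,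
      Finset.mul_sum, ← Finset.sum_sub_distrib]
    refine Finset.sum_le_sum fun x _ => ?_
    rw [Finset.sum_comm (s := (Finset.univ : Finset (Fin s))), Finset.mul_sum,
      Finset.mul_sum, ← Finset.sum_sub_distrib]
    exact Finset.sum_le_sum fun y _ => majThr_corr w v θ (x, y)
  have hsumthr := Finset.sum_le_card_nsmul Finset.univ _ _ fun i _ => hthr i
  rw [Finset.card_univ, Fintype.card_fin, nsmul_eq_mul] at hsumthr
  have hs' : (s : ℝ) ≤ 2 ^ q := by exact_mod_cast hs
  set t : ℝ := 2 ^ q with ht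
  have ht1 : 1 ≤ t := one_le_pow₀ (by norm_num)
  have hm : (2 : ℝ) ^ (q + 3) = 8 * t := by rw [pow_add]; ring
  have hρt : ρ * (128 * t ^ 2) = 1 := by
    rw [hρ, show (2 : ℝ) ^ (7 + 2 * q) = 128 * t ^ 2 by rw [pow_add, pow_mul', ht]; norm_num]
    exact inv_mul_cancel₀ (by positivity)
  have hKY : 8 * t * (K * Fintype.card Y) = N := by
    rw [hN, hcard]; push_cast; rw [hm]; ring
  rw [hm] at hsumthr
  set Z : ℝ := K * Fintype.card Y with hZ
  have hZ0 : 0 ≤ Z := by positivity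
  have hP0 : 0 < ρ * N := by positivity
  set P : ℝ := ρ * N with hP
  have hPN : P * (128 * t ^ 2) = N := by rw [hP, mul_right_comm, hρt, one_mul]
  have b1 : (s : ℝ) * (8 * t * P + Z) ≤ t * (8 * t * P + Z) :=
    mul_le_mul_of_nonneg_right hs' (by positivity)
  have b2 : -((s + 1 / 2 : ℝ) * ∑ x : X, ∑ y : Y, f (x, y)) ≤ (t + 1 / 2) * P := by
    have : (s + 1 / 2 : ℝ) * (-P) ≤ (s + 1 / 2) * ∑ x : X, ∑ y : Y, f (x, y) :=
      mul_le_mul_of_nonneg_left hone (by positivity)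
    have : (s : ℝ) * P ≤ t * P := mul_le_mul_of_nonneg_right hs' hP0.le
    linarith
  have b3 : t * P ≤ t ^ 2 * P := by
    apply mul_le_mul_of_nonneg_right _ hP0.le
    nlinarith
  have b4 : P ≤ t ^ 2 * P := le_mul_of_one_le_left hP0.le (one_le_pow₀ ht1)
  have b5 : 0 < t ^ 2 * P := by positivity
  nlinarith

/-! ### Largeness -/

lemma sgn_not (b : Bool) : sgn (!b) = -sgn b := by cases b <;> simp [sgn]

/-- A product of four random signs has mean zero if one position differs from the others. -/
lemma sum_sgn_eq_zero {Z : Type*} [Fintype Z] [DecidableEq Z] (a b c d : Z)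
    (hb : b ≠ a) (hc : c ≠ a) (hd : d ≠ a) :
    ∑ g : Z → Bool, sgn (g a) * sgn (g b) * sgn (g c) * sgn (g d) = 0 := by
  let F : (Z → Bool) → (Z → Bool) := fun g => Function.update g a (!g a)
  have hF : Function.Involutive F := by
    intro g
    simp [F]
  have h := Equiv.sum_comp (hF.toPerm F)
    (fun g : Z → Bool => sgn (g a) * sgn (g b) * sgn (g c) * sgn (g d))
  have h2 : ∀ g : Z → Bool, sgn (hF.toPerm F g a) * sgn (hF.toPerm F g b) * sgn (hF.toPerm F g c) *
      sgn (hF.toPerm F g d) = -(sgn (g a) * sgn (g b) * sgn (g c) * sgn (g d)) := by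
    intro g
    simp [F, Function.Involutive.coe_toPerm, Function.update_of_ne, hb, hc, hd, sgn_not]
  rw [Finset.sum_congr rfl fun g _ => h2 g, Finset.sum_neg_distrib] at h
  linarith

lemma abs_sgn (b : Bool) : |sgn b| = 1 := by cases b <;> simp [sgn]

/-- Markov's inequality in counting form: if the nonnegative `F` has mean at most `μ ≤ L / 2`, then
`F ≤ L` on at least half of the points. -/
lemma half_le_of_sum_le {Ω : Type*} [Fintype Ω] [Nonempty Ω] (F : Ω → ℝ) (μ L : ℝ) (hL : 0 < L)
    (hμ : 2 * μ ≤ L) (hF : ∀ g, 0 ≤ F g) (h : ∑ g, F g ≤ Fintype.card Ω * μ) :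
    (1 : ℝ) / 2 ≤ ((Finset.univ.filter fun g => F g ≤ L).card : ℝ) / (Fintype.card Ω : ℝ) := by
  have hC0 : (0 : ℝ) < Fintype.card Ω := by exact_mod_cast Fintype.card_pos
  have hmarkov : ((Finset.univ.filter fun g => ¬ F g ≤ L).card : ℝ) * L ≤ Fintype.card Ω * μ := by
    refine le_trans ?_ h
    rw [← nsmul_eq_mul]
    refine (Finset.card_nsmul_le_sum _ F L fun g hg => ?_).trans ?_
    · exact (not_le.1 (Finset.mem_filter.1 hg).2).le
    · exact Finset.sum_le_sum_of_subset_of_nonneg (Finset.filter_subset _ _) fun g _ _ => hF g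
  have hcompl := Finset.card_filter_add_card_filter_not (s := Finset.univ) (fun g => F g ≤ L)
  rw [Finset.card_univ] at hcompl
  have hcompl' := congrArg (Nat.cast : ℕ → ℝ) hcompl
  rw [Nat.cast_add] at hcompl'
  set D : ℝ := ((Finset.univ.filter fun g => ¬ F g ≤ L).card : ℝ)
  have hD2 : 2 * D ≤ Fintype.card Ω := by
    have : (2 * D) * L ≤ Fintype.card Ω * L := by
      have := mul_le_mul_of_nonneg_left hμ hC0.le
      linarith
    exact le_of_mul_le_mul_right this hL
  rw [le_div_iff₀ hC0]
  linarith

lemma sum_R2_le {X Y : Type*} [Fintype X] [Fintype Y] [Nonempty X] [Nonempty Y]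
    [DecidableEq (X × Y)] :
    ∑ g : X × Y → Bool, (Fintype.card X : ℝ) * Fintype.card Y * R2 (fun p => sgn (g p)) ≤
      Fintype.card (X × Y → Bool) * ((Fintype.card X : ℝ) + Fintype.card Y) := by
  have hX : (0 : ℝ) < Fintype.card X := by exact_mod_cast Fintype.card_pos
  have hY : (0 : ℝ) < Fintype.card Y := by exact_mod_cast Fintype.card_pos
  set C : ℝ := (Fintype.card (X × Y → Bool) : ℝ) with hC
  have hC0 : 0 ≤ C := by positivity
  have hterm : ∀ (x x' : X) (y y' : Y), ∑ g : X × Y → Bool,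
      sgn (g (x, y)) * sgn (g (x, y')) * sgn (g (x', y)) * sgn (g (x', y')) ≤
      C * ((if x = x' then 1 else 0) + (if y = y' then 1 else 0)) := by
    intro x x' y y'
    by_cases h : x ≠ x' ∧ y ≠ y'
    · rw [sum_sgn_eq_zero]
      · positivity
      · simpa using h.2.symm
      · simp [h.1.symm]
      · simp [h.1.symm]
    · have h1 : (1 : ℝ) ≤ (if x = x' then 1 else 0) + (if y = y' then 1 else 0) := by
        by_cases hx : x = x'
        · simp only [hx, if_true]; split_ifs <;> norm_num
        · have hy : y = y' := by tauto
          simp [hx, hy]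
      refine (Finset.sum_le_card_nsmul _ _ (1 : ℝ) fun g _ => ?_).trans ?_
      · refine (le_abs_self _).trans ?_
        simp [abs_mul, abs_sgn]
      · rw [Finset.card_univ, nsmul_eq_mul]
        exact mul_le_mul_of_nonneg_left h1 hC0
  have hswap : ∑ g : X × Y → Bool, (∑ x : X, ∑ x' : X, ∑ y : Y, ∑ y' : Y,
      sgn (g (x, y)) * sgn (g (x, y')) * sgn (g (x', y)) * sgn (g (x', y'))) ≤
      C * ((Fintype.card X : ℝ) * Fintype.card Y ^ 2 + Fintype.card X ^ 2 * Fintype.card Y) := by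
    calc _ = ∑ x : X, ∑ x' : X, ∑ y : Y, ∑ y' : Y, ∑ g : X × Y → Bool,
          sgn (g (x, y)) * sgn (g (x, y')) * sgn (g (x', y)) * sgn (g (x', y')) := by
          rw [Finset.sum_comm]
          refine Finset.sum_congr rfl fun x _ => ?_
          rw [Finset.sum_comm]
          refine Finset.sum_congr rfl fun x' _ => ?_
          rw [Finset.sum_comm]
          refine Finset.sum_congr rfl fun y _ => ?_
          rw [Finset.sum_comm]
      _ ≤ ∑ x : X, ∑ x' : X, ∑ y : Y, ∑ y' : Y,
          C * ((if x = x' then 1 else 0) + (if y = y' then 1 else 0)) :=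
          Finset.sum_le_sum fun x _ => Finset.sum_le_sum fun x' _ => Finset.sum_le_sum fun y _ =>
            Finset.sum_le_sum fun y' _ => hterm x x' y y'
      _ = _ := by
          simp only [← Finset.mul_sum, Finset.sum_add_distrib, Finset.sum_const, Finset.card_univ,
            nsmul_eq_mul, Finset.sum_ite_eq, Finset.mem_univ, if_true]
          ring
  simp only [R2]
  rw [← Finset.mul_sum, ← Finset.sum_div]
  refine (mul_le_mul_of_nonneg_left (div_le_div_of_nonneg_right hswap (by positivity))
    (by positivity)).trans (le_of_eq ?_)
  field_simp
  ring

/-- Nisan's natural property for majority-of-threshold circuits: for some constant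
`c > 0` and all large `n`, (i) usefulness: every majority of at most `2^{⌊n/c⌋}`
linear threshold functions `f` has `2^n · R₂(f) > 2^{2n/3}`; and (ii) largeness with
density `1/2`: a uniformly random `±1` function satisfies `2^n · R₂(f) ≤ 2^{2n/3}`
with probability at least `1/2`. -/
theorem stmt_11 :
    ∃ c : ℕ, 0 < c ∧ ∃ n₀ : ℕ, ∀ n : ℕ, n₀ ≤ n →
      (∀ s : ℕ, s ≤ 2 ^ (n / c) →
        ∀ (w : Fin s → Fin ((n + 1) / 2) → ℝ) (v : Fin s → Fin (n / 2) → ℝ)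
          (θ : Fin s → ℝ),
          (2 : ℝ) ^ ((2 * (n : ℝ)) / 3) < (2 : ℝ) ^ n * R2 (majThr n s w v θ)) ∧
      (1 : ℝ) / 2 ≤
        ((Finset.univ.filter fun g : (Fin ((n + 1) / 2) → Bool) × (Fin (n / 2) → Bool) → Bool =>
            (2 : ℝ) ^ n * R2 (fun p => sgn (g p)) ≤ (2 : ℝ) ^ ((2 * (n : ℝ)) / 3)).card : ℝ) /
          (Fintype.card (((Fin ((n + 1) / 2) → Bool) × (Fin (n / 2) → Bool)) → Bool) : ℝ) := by
  classical
  refine ⟨48, by norm_num, 1000, fun n hn => ⟨?_, ?_⟩⟩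
  · intro s hs w v θ
    have hq : 48 * (n / 48) ≤ n := Nat.mul_div_le n 48
    have h := majThr_R2_lower n s (n / 48) hs (by omega) w v θ
    set q := n / 48
    have hq' : 48 * (q : ℝ) ≤ n := by exact_mod_cast hq
    have hn' : (1000 : ℝ) ≤ n := by exact_mod_cast hn
    refine lt_of_lt_of_le ?_ (mul_le_mul_of_nonneg_left h (by positivity))
    have e : (2 : ℝ) ^ n * (((2 : ℝ) ^ (7 + 2 * q))⁻¹) ^ 4 =
        (2 : ℝ) ^ ((n : ℝ) - (28 + 8 * q)) := by
      rw [Real.rpow_sub (by norm_num), Real.rpow_natCast, inv_pow, ← pow_mul, div_eq_mul_inv,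
        ← Real.rpow_natCast 2 ((7 + 2 * q) * 4)]
      congr 3
      push_cast
      ring
    rw [e]
    apply Real.rpow_lt_rpow_of_exponent_lt (by norm_num)
    linarith
  · let X := Fin ((n + 1) / 2) → Bool
    let Y := Fin (n / 2) → Bool
    have hn' : (1000 : ℝ) ≤ n := by exact_mod_cast hn
    have hcX : (Fintype.card X : ℝ) = 2 ^ ((n + 1) / 2) := by simp [X]
    have hcY : (Fintype.card Y : ℝ) = 2 ^ (n / 2) := by simp [Y]
    have hXY : (Fintype.card X : ℝ) * Fintype.card Y = 2 ^ n := by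
      rw [hcX, hcY, ← pow_add]
      congr 1
      omega
    have hS := sum_R2_le (X := X) (Y := Y)
    rw [hXY] at hS
    set L : ℝ := (2 : ℝ) ^ ((2 * (n : ℝ)) / 3) with hL
    have hL0 : 0 < L := by positivity
    have hsmall : 2 * ((Fintype.card X : ℝ) + Fintype.card Y) ≤ L := by
      have h1 : (Fintype.card Y : ℝ) ≤ Fintype.card X := by
        rw [hcX, hcY]
        exact pow_le_pow_right₀ (by norm_num) (by omega)
      have h2 : 4 * (Fintype.card X : ℝ) ≤ L := by
        have e : 4 * (Fintype.card X : ℝ) = (2 : ℝ) ^ (((n + 1) / 2 + 2 : ℕ) : ℝ) := by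
          rw [Real.rpow_natCast, hcX, pow_add]
          ring
        rw [e, hL]
        apply Real.rpow_le_rpow_of_exponent_le (by norm_num)
        have h3 : 2 * ((n + 1) / 2) ≤ n + 1 := Nat.mul_div_le _ _
        have h4 : 2 * (((n + 1) / 2 : ℕ) : ℝ) ≤ n + 1 := by exact_mod_cast h3
        push_cast at h4 ⊢
        linarith
      linarith
    exact half_le_of_sum_le _ _ _ hL0 hsmall
      (fun g => mul_nonneg (by positivity) (R2_nonneg _)) hS
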